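/- Let ψ solve □ψ = g on (0,∞) × R^3 with zero initial data, and suppose sup_{|ω|=1} |g(t, rω)| ≤ C ⟨r⟩^{-α} ⟨t+r⟩^{-β} ⟨t-r⟩^{-η} with α ∈ (2,3), β ≥ 0, η ≥ -1/2, and α+β+η < 3. Then in the exterior region { |x| - t > 1 }, |ψ(t,x)| ≲ C |x|^{2-(α+β+η)}. -/

import Mathlib

/-!
The proof has two ingredients.

*Kirchhoff's formula* (`kirchhoff`): for zero data,
`4π ψ(t, x) = -∫₀ᵗ ∫_{S²} τ □ψ(t - τ, x + τ ω) dω dτ`. In spherical coordinates the integrand is the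
divergence of an explicit vector field on the box `(τ, θ, φ)`, so the formula is the fundamental
theorem of calculus in each variable together with Fubini.

*A cone estimate* (`cone_bound`): with the polar axis along `x`, the substitution `ρ = |x + τ ω|`
turns the formula into `r |ψ| ≤ (1/2) ∫∫ ρ h(s, ρ) dρ ds` over the backward cone (`sphere_subst`).
There `ρ - s ≥ r - t > 1`, so `h ≲ C ρ ^ (-α-β) (ρ - s) ^ (-η)` (`jap_bound`). In the coordinate
`u = ρ - s`, which runs within `[r - t, r + t]`, integrating in `s` first yields
`u ^ (2-α-β-η)` up to a constant because `α + β > 2`, and integrating in `u` yields at most a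
multiple of `(r + t) ^ (3-α-β-η) ≤ (2r) ^ (3-α-β-η)` because `α + β + η < 3` (`null_estimate`).
Dividing by `r` gives the claim.
-/


open MeasureTheory Real Set

noncomputable section

abbrev E3 := EuclideanSpace ℝ (Fin 3)

def jap (s : ℝ) : ℝ := Real.sqrt (1 + s ^ 2)

/-- The d'Alembertian `□ψ = -∂_t²ψ + Δψ` in coordinates. -/
def boxOp (ψ : ℝ → E3 → ℝ) (t : ℝ) (x : E3) : ℝ :=
  -(deriv (deriv fun s => ψ s x) t) +
    ∑ i : Fin 3,
      deriv (deriv fun h : ℝ => ψ t (x + h • EuclideanSpace.single i (1 : ℝ))) 0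

/-! ### Iterated integrals of continuous functions -/

lemma swap_cont {F : ℝ → ℝ → ℝ} (hF : Continuous (Function.uncurry F)) (a b c d : ℝ) :
    ∫ x in a..b, ∫ y in c..d, F x y = ∫ y in c..d, ∫ x in a..b, F x y := by
  apply intervalIntegral_intervalIntegral_swap
  refine (hF.continuousOn.integrableOn_compact ((isCompact_uIcc (a := a) (b := b)).prod
    (isCompact_uIcc (a := c) (b := d)))).mono_set ?_
  exact Set.prod_mono uIoc_subset_uIcc uIoc_subset_uIcc

lemma cont_inner {F : ℝ → ℝ → ℝ → ℝ}
    (hF : Continuous fun p : ℝ × ℝ × ℝ => F p.1 p.2.1 p.2.2) (c d : ℝ) :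
    Continuous (Function.uncurry fun x y => ∫ z in c..d, F x y z) := by
  apply intervalIntegral.continuous_parametric_intervalIntegral_of_continuous'
  exact hF.comp (by fun_prop : Continuous fun p : (ℝ × ℝ) × ℝ => (p.1.1, p.1.2, p.2))

lemma cont_param {F : ℝ → ℝ → ℝ}
    (hF : Continuous (Function.uncurry F)) (c d : ℝ) :
    Continuous (fun x => ∫ z in c..d, F x z) := by
  apply intervalIntegral.continuous_parametric_intervalIntegral_of_continuous'
  exact hF

/-- The fundamental theorem of calculus in the outermost variable of a triple integral; applied in
each of the three variables it gives the divergence theorem on a box. -/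
lemma triple_ftc {X X' : ℝ → ℝ → ℝ → ℝ}
    (hX : ∀ x y z, HasDerivAt (fun s => X s y z) (X' x y z) x)
    (hc : Continuous fun p : ℝ × ℝ × ℝ => X' p.1 p.2.1 p.2.2) (a b c d e f : ℝ) :
    ∫ x in a..b, ∫ y in c..d, ∫ z in e..f, X' x y z
      = ∫ y in c..d, ∫ z in e..f, (X b y z - X a y z) := by
  rw [swap_cont (cont_inner hc e f)]
  congr 1; ext y
  rw [swap_cont (F := fun x z => X' x y z)
    (hc.comp (by fun_prop : Continuous fun p : ℝ × ℝ => (p.1, y, p.2)))]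
  congr 1; ext z
  refine intervalIntegral.integral_eq_sub_of_hasDerivAt (fun x _ => hX x y z) ?_
  exact (hc.comp (by fun_prop : Continuous fun p : ℝ => (p, y, z))).intervalIntegrable _ _

lemma triple_add {X Y : ℝ → ℝ → ℝ → ℝ}
    (hX : Continuous fun p : ℝ × ℝ × ℝ => X p.1 p.2.1 p.2.2)
    (hY : Continuous fun p : ℝ × ℝ × ℝ => Y p.1 p.2.1 p.2.2) (a b c d e f : ℝ) :
    ∫ x in a..b, ∫ y in c..d, ∫ z in e..f, (X x y z + Y x y z)
      = (∫ x in a..b, ∫ y in c..d, ∫ z in e..f, X x y z)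
        + ∫ x in a..b, ∫ y in c..d, ∫ z in e..f, Y x y z := by
  have key : ∀ {X : ℝ → ℝ → ℝ → ℝ}, Continuous (fun p : ℝ × ℝ × ℝ => X p.1 p.2.1 p.2.2) →
      (∀ x y, Continuous fun z => X x y z) ∧ (∀ x, Continuous fun y => ∫ z in e..f, X x y z) ∧
      Continuous fun x => ∫ y in c..d, ∫ z in e..f, X x y z := by
    intro X hX
    have h := cont_inner hX e f
    exact ⟨fun x y => hX.comp (by fun_prop : Continuous fun p : ℝ => (x, y, p)),
      fun x => h.comp (by fun_prop : Continuous fun p : ℝ => (x, p)), cont_param h c d⟩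
  obtain ⟨h1, h2, h3⟩ := key hX
  obtain ⟨k1, k2, k3⟩ := key hY
  rw [← intervalIntegral.integral_add (h3.intervalIntegrable _ _) (k3.intervalIntegrable _ _)]
  congr 1; ext x
  rw [← intervalIntegral.integral_add ((h2 x).intervalIntegrable _ _)
    ((k2 x).intervalIntegrable _ _)]
  congr 1; ext y
  rw [← intervalIntegral.integral_add ((h1 x y).intervalIntegrable _ _)
    ((k1 x y).intervalIntegrable _ _)]

/-! ### The spherical frame -/

/-- The point of the unit sphere with polar angle `θ` from `e 2` and azimuth `φ`, in the frame `e`. -/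
def sphR (e : Fin 3 → E3) (θ φ : ℝ) : E3 :=
  (sin θ * cos φ) • e 0 + (sin θ * sin φ) • e 1 + cos θ • e 2

/-- The unit tangent `∂_θ` of the sphere at `sphR e θ φ`. -/
def sphT (e : Fin 3 → E3) (θ φ : ℝ) : E3 :=
  (cos θ * cos φ) • e 0 + (cos θ * sin φ) • e 1 - sin θ • e 2

/-- The unit tangent of the sphere in the `φ` direction; `∂_φ (sphR e θ φ) = sin θ • sphP e φ`, so
this field stays smooth at the poles. -/
def sphP (e : Fin 3 → E3) (φ : ℝ) : E3 := -sin φ • e 0 + cos φ • e 1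

lemma hasDerivAt_sphR_theta (e : Fin 3 → E3) (θ φ : ℝ) :
    HasDerivAt (fun s => sphR e s φ) (sphT e θ φ) θ := by
  unfold sphR sphT
  have := ((((hasDerivAt_sin θ).mul_const (cos φ)).smul_const (e 0)).add
    (((hasDerivAt_sin θ).mul_const (sin φ)).smul_const (e 1))).add
    ((hasDerivAt_cos θ).smul_const (e 2))
  refine this.congr_deriv ?_
  module

lemma hasDerivAt_sphT_theta (e : Fin 3 → E3) (θ φ : ℝ) :
    HasDerivAt (fun s => sphT e s φ) (-sphR e θ φ) θ := by
  unfold sphR sphT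
  have := ((((hasDerivAt_cos θ).mul_const (cos φ)).smul_const (e 0)).add
    (((hasDerivAt_cos θ).mul_const (sin φ)).smul_const (e 1))).sub
    ((hasDerivAt_sin θ).smul_const (e 2))
  refine this.congr_deriv ?_
  module

lemma hasDerivAt_sphR_phi (e : Fin 3 → E3) (θ φ : ℝ) :
    HasDerivAt (fun s => sphR e θ s) (sin θ • sphP e φ) φ := by
  unfold sphR sphP
  have := ((((hasDerivAt_cos φ).const_mul (sin θ)).smul_const (e 0)).add
    (((hasDerivAt_sin φ).const_mul (sin θ)).smul_const (e 1))).add_const (cos θ • e 2)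
  refine this.congr_deriv ?_
  module

lemma hasDerivAt_sphP (e : Fin 3 → E3) (θ φ : ℝ) :
    HasDerivAt (fun s => sphP e s) (-(sin θ • sphR e θ φ + cos θ • sphT e θ φ)) φ := by
  unfold sphR sphP sphT
  have := (((hasDerivAt_sin φ).neg.smul_const (e 0)).add
    ((hasDerivAt_cos φ).smul_const (e 1)))
  refine this.congr_deriv ?_
  have h := sin_sq_add_cos_sq θ
  have h2 : ∀ (c d : ℝ), -(sin θ • ((sin θ * c) • e 0 + (sin θ * d) • e 1 + cos θ • e 2) +
      cos θ • ((cos θ * c) • e 0 + (cos θ * d) • e 1 - sin θ • e 2)) =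
      -(sin θ ^ 2 + cos θ ^ 2) • (c • e 0 + d • e 1) := by intros; module
  rw [h2, h]
  module

/-- The frame `(sphR, sphT, sphP)` is orthonormal relative to `e`, so it computes the same trace. -/
lemma trace_sph (Q : E3 →L[ℝ] E3 →L[ℝ] ℝ) (e : Fin 3 → E3) (θ φ : ℝ) :
    Q (sphR e θ φ) (sphR e θ φ) + Q (sphT e θ φ) (sphT e θ φ) + Q (sphP e φ) (sphP e φ)
      = ∑ i, Q (e i) (e i) := by
  have h1 := sin_sq_add_cos_sq θ
  have h2 := sin_sq_add_cos_sq φ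
  simp only [sphR, sphT, sphP, map_add, map_sub, map_smul, map_neg, neg_smul,
    add_apply, sub_apply, neg_apply,
    smul_apply, smul_eq_mul, Fin.sum_univ_three]
  linear_combination (Q (e 0) (e 0) * cos φ ^ 2 + Q (e 1) (e 1) * sin φ ^ 2 + Q (e 2) (e 2)
    + (Q (e 0) (e 1) + Q (e 1) (e 0)) * (cos φ * sin φ)) * h1 +
    (Q (e 0) (e 0) + Q (e 1) (e 1)) * h2

lemma trace_basis (Q : E3 →L[ℝ] E3 →L[ℝ] ℝ) (v w : OrthonormalBasis (Fin 3) ℝ E3) :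
    ∑ i, Q (v i) (v i) = ∑ i, Q (w i) (w i) := by
  have h := (InnerProductSpace.canonicalCovariantTensor_eq_sum E3 v).symm.trans
    (InnerProductSpace.canonicalCovariantTensor_eq_sum E3 w)
  let q : E3 →ₗ[ℝ] E3 →ₗ[ℝ] ℝ :=
    LinearMap.mk₂ ℝ (fun a b => Q a b) (by simp) (by simp) (by simp) (by simp)
  simpa [q] using congrArg (TensorProduct.lift q) h

/-! ### Kirchhoff's formula -/

/-- `□ψ` in terms of the second Fréchet derivative on `ℝ × E3`, in any orthonormal basis. -/
lemma box_eq {ψ : ℝ → E3 → ℝ} (hψ : ContDiff ℝ (⊤ : ℕ∞) (fun p : ℝ × E3 => ψ p.1 p.2))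
    (t : ℝ) (x : E3) (e : OrthonormalBasis (Fin 3) ℝ E3) :
    boxOp ψ t x = -(fderiv ℝ (fderiv ℝ fun p : ℝ × E3 => ψ p.1 p.2) (t, x) (1, 0) (1, 0))
      + ∑ i, fderiv ℝ (fderiv ℝ fun p : ℝ × E3 => ψ p.1 p.2) (t, x) (0, e i) (0, e i) := by
  set Ψ : ℝ × E3 → ℝ := fun p => ψ p.1 p.2 with hΨ
  have hd : Differentiable ℝ Ψ := hψ.differentiable (by simp)
  have hd1 : ContDiff ℝ (⊤ : ℕ∞) (fderiv ℝ Ψ) := hψ.fderiv_right (by simp)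
  have hd2 : Differentiable ℝ (fderiv ℝ Ψ) := hd1.differentiable (by simp)
  have line : ∀ (c : ℝ → ℝ × E3) (w : ℝ × E3), (∀ s, HasDerivAt c w s) → ∀ s,
      deriv (deriv fun s => Ψ (c s)) s = fderiv ℝ (fderiv ℝ Ψ) (c s) w w := by
    intro c w hc s
    have h1 : (deriv fun s => Ψ (c s)) = fun s => fderiv ℝ Ψ (c s) w := by
      ext s
      exact ((hd (c s)).hasFDerivAt.comp_hasDerivAt s (hc s)).deriv
    rw [h1]
    have := ((hd2 (c s)).hasFDerivAt.comp_hasDerivAt s (hc s)).clm_apply (hasDerivAt_const s w)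
    simpa using this.deriv
  have hT := line (fun s => (s, x)) (1, 0)
    (fun s => (hasDerivAt_id s).prodMk (hasDerivAt_const s x)) t
  let Q : E3 →L[ℝ] E3 →L[ℝ] ℝ :=
    ((ContinuousLinearMap.compL ℝ E3 (ℝ × E3) ℝ).flip (ContinuousLinearMap.inr ℝ ℝ E3)).comp
      ((fderiv ℝ (fderiv ℝ Ψ) (t, x)).comp (ContinuousLinearMap.inr ℝ ℝ E3))
  have hQ : ∀ v w, Q v w = fderiv ℝ (fderiv ℝ Ψ) (t, x) (0, v) (0, w) := by
    intro v w; simp [Q]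
  have hb := trace_basis Q e (EuclideanSpace.basisFun (Fin 3) ℝ)
  simp only [hQ] at hb
  rw [boxOp, hb]
  congr 1
  · exact congrArg Neg.neg hT
  · refine Finset.sum_congr rfl fun i _ => ?_
    have := line (fun h => (t, x + h • EuclideanSpace.single i (1 : ℝ)))
      (0, EuclideanSpace.single i (1 : ℝ))
      (fun s => (hasDerivAt_const s t).prodMk (by
        simpa using ((hasDerivAt_id s).smul_const
          (EuclideanSpace.single i (1 : ℝ))).const_add x)) 0
    simpa using this

/-- `trace_sph` for a bilinear form on space-time, restricted to spatial directions. -/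
lemma trace_sph' (Q : (ℝ × E3) →L[ℝ] (ℝ × E3) →L[ℝ] ℝ) (e : Fin 3 → E3) (θ φ : ℝ) :
    Q (0, sphR e θ φ) (0, sphR e θ φ) + Q (0, sphT e θ φ) (0, sphT e θ φ)
      + Q (0, sphP e φ) (0, sphP e φ) = ∑ i, Q (0, e i) (0, e i) := by
  have := trace_sph
    (((ContinuousLinearMap.compL ℝ E3 (ℝ × E3) ℝ).flip (ContinuousLinearMap.inr ℝ ℝ E3)).comp
      (Q.comp (ContinuousLinearMap.inr ℝ ℝ E3))) e θ φ
  simpa using this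

set_option maxHeartbeats 1600000 in
/-- Kirchhoff's formula with zero data. With `ω, a, b` the spherical frame and everything evaluated at
the point `(t - τ, x + τ ω)` of the backward light cone,
`τ sin θ □ψ = ∂_τ (sin θ (ψ + τ (∂_t + ∂_ω) ψ)) + ∂_θ (sin θ ∂_a ψ) + ∂_φ (∂_b ψ)`.
The `θ` and `φ` terms integrate to zero (`sin` vanishes at `0, π`; periodicity), and the `τ` term
leaves `-sin θ ψ(t, x)` at the tip of the cone, its value at `τ = t` vanishing by the data. -/
lemma kirchhoff {ψ : ℝ → E3 → ℝ} (hψ : ContDiff ℝ (⊤ : ℕ∞) (fun p : ℝ × E3 => ψ p.1 p.2))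
    (h0 : ∀ x, ψ 0 x = 0) (h1 : ∀ x, deriv (fun s => ψ s x) 0 = 0)
    (e : OrthonormalBasis (Fin 3) ℝ E3) (t : ℝ) (x : E3) :
    ∫ τ in (0 : ℝ)..t, ∫ θ in (0 : ℝ)..π, ∫ φ in (0 : ℝ)..(2 * π),
      τ * sin θ * boxOp ψ (t - τ) (x + τ • sphR e θ φ) = -(4 * π * ψ t x) := by
  set Ψ : ℝ × E3 → ℝ := fun p => ψ p.1 p.2 with hΨ
  have hd : Differentiable ℝ Ψ := hψ.differentiable (by simp)
  have hd1 : ContDiff ℝ (⊤ : ℕ∞) (fderiv ℝ Ψ) := hψ.fderiv_right (by simp)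
  have hd2 : Differentiable ℝ (fderiv ℝ Ψ) := hd1.differentiable (by simp)
  set D := fderiv ℝ Ψ with hD
  have hDc : Continuous D := hd1.continuous
  have hDDc : Continuous (fderiv ℝ D) := hd1.continuous_fderiv (by simp)
  have hsymm : ∀ p v w, fderiv ℝ D p v w = fderiv ℝ D p w v := fun p v w =>
    (hψ.contDiffAt.isSymmSndFDerivAt (by simp only [minSmoothness_of_isRCLikeNormedField]; exact WithTop.coe_le_coe.2 (le_top : (2 : ℕ∞) ≤ ⊤))) v w
  let c : ℝ → ℝ → ℝ → ℝ × E3 := fun τ θ φ => (t - τ, x + τ • sphR e θ φ)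
  have hcτ : ∀ τ θ φ, HasDerivAt (fun s => c s θ φ) (-1, sphR e θ φ) τ := fun τ θ φ => by
    refine HasDerivAt.prodMk ?_ ?_
    · simpa using (hasDerivAt_id τ).const_sub t
    · simpa using ((hasDerivAt_id τ).smul_const (sphR e θ φ)).const_add x
  have hcθ : ∀ τ θ φ, HasDerivAt (fun s => c τ s φ) (0, τ • sphT e θ φ) θ := fun τ θ φ =>
    (hasDerivAt_const θ _).prodMk (((hasDerivAt_sphR_theta e θ φ).const_smul τ).const_add x)
  have hcφ : ∀ τ θ φ, HasDerivAt (fun s => c τ θ s) (0, τ • sin θ • sphP e φ) φ := fun τ θ φ =>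
    (hasDerivAt_const φ _).prodMk (((hasDerivAt_sphR_phi e θ φ).const_smul τ).const_add x)
  let X : ℝ → ℝ → ℝ → ℝ := fun τ θ φ =>
    sin θ * (Ψ (c τ θ φ) + τ * D (c τ θ φ) (1, sphR e θ φ))
  let X' : ℝ → ℝ → ℝ → ℝ := fun τ θ φ =>
    sin θ * (D (c τ θ φ) (-1, sphR e θ φ) + (D (c τ θ φ) (1, sphR e θ φ)
      + τ * fderiv ℝ D (c τ θ φ) (-1, sphR e θ φ) (1, sphR e θ φ)))
  let Y : ℝ → ℝ → ℝ → ℝ := fun θ τ φ => sin θ * D (c τ θ φ) (0, sphT e θ φ)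
  let Y' : ℝ → ℝ → ℝ → ℝ := fun θ τ φ => cos θ * D (c τ θ φ) (0, sphT e θ φ) +
    sin θ * (fderiv ℝ D (c τ θ φ) (0, τ • sphT e θ φ) (0, sphT e θ φ)
      + D (c τ θ φ) (0, -sphR e θ φ))
  let Z : ℝ → ℝ → ℝ → ℝ := fun φ τ θ => D (c τ θ φ) (0, sphP e φ)
  let Z' : ℝ → ℝ → ℝ → ℝ := fun φ τ θ =>
    fderiv ℝ D (c τ θ φ) (0, τ • sin θ • sphP e φ) (0, sphP e φ)
      + D (c τ θ φ) (0, -(sin θ • sphR e θ φ + cos θ • sphT e θ φ))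
  have hX : ∀ τ θ φ, HasDerivAt (fun s => X s θ φ) (X' τ θ φ) τ := fun τ θ φ => by
    have a1 := (hd (c τ θ φ)).hasFDerivAt.comp_hasDerivAt τ (hcτ τ θ φ)
    have a2 := ((hd2 (c τ θ φ)).hasFDerivAt.comp_hasDerivAt τ (hcτ τ θ φ)).clm_apply
      (hasDerivAt_const τ ((1 : ℝ), sphR e θ φ))
    refine ((a1.add ((hasDerivAt_id τ).mul a2)).const_mul (sin θ)).congr_deriv ?_
    simp [X', hD]
  have hY : ∀ θ τ φ, HasDerivAt (fun s => Y s τ φ) (Y' θ τ φ) θ := fun θ τ φ => by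
    have a2 := ((hd2 (c τ θ φ)).hasFDerivAt.comp_hasDerivAt θ (hcθ τ θ φ)).clm_apply
      ((hasDerivAt_const θ (0 : ℝ)).prodMk (hasDerivAt_sphT_theta e θ φ))
    refine ((hasDerivAt_sin θ).mul a2).congr_deriv ?_
    simp [Y', hD]
  have hZ : ∀ φ τ θ, HasDerivAt (fun s => Z s τ θ) (Z' φ τ θ) φ := fun φ τ θ => by
    have a2 := ((hd2 (c τ θ φ)).hasFDerivAt.comp_hasDerivAt φ (hcφ τ θ φ)).clm_apply
      ((hasDerivAt_const φ (0 : ℝ)).prodMk (hasDerivAt_sphP e θ φ))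
    refine a2.congr_deriv ?_
    simp [Z', hD]
  have hR' : Continuous fun p : ℝ × ℝ × ℝ => sphR e p.2.1 p.2.2 := by unfold sphR; fun_prop
  have hT' : Continuous fun p : ℝ × ℝ × ℝ => sphT e p.2.1 p.2.2 := by unfold sphT; fun_prop
  have hP' : Continuous fun p : ℝ × ℝ × ℝ => sphP e p.2.2 := by unfold sphP; fun_prop
  have hcc : Continuous fun p : ℝ × ℝ × ℝ => c p.1 p.2.1 p.2.2 := by
    simp only [c]; fun_prop
  have hXc : Continuous fun p : ℝ × ℝ × ℝ => X' p.1 p.2.1 p.2.2 := by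
    simp only [X']; fun_prop
  have hYc : Continuous fun p : ℝ × ℝ × ℝ => Y' p.2.1 p.1 p.2.2 := by
    simp only [Y']; fun_prop
  have hZc : Continuous fun p : ℝ × ℝ × ℝ => Z' p.2.2 p.1 p.2.1 := by
    simp only [Z']; fun_prop
  have hsum : ∀ τ θ φ, τ * sin θ * boxOp ψ (t - τ) (x + τ • sphR e θ φ) =
      X' τ θ φ + (Y' θ τ φ + Z' φ τ θ) := by
    intro τ θ φ
    rw [box_eq hψ _ _ e, ← trace_sph']
    change τ * sin θ * (-(fderiv ℝ D (c τ θ φ) (1, 0) (1, 0)) + _) = _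
    have e1 : ((-1 : ℝ), sphR e θ φ) = (0, sphR e θ φ) - (1, 0) := by simp
    have e2 : ((1 : ℝ), sphR e θ φ) = (0, sphR e θ φ) + (1, 0) := by simp
    have e3 : ∀ (a : ℝ) (v : E3), ((0 : ℝ), a • v) = a • (0, v) := by simp
    have e4 : ∀ (v : E3), ((0 : ℝ), -v) = -(0, v) := by simp
    have e5 : ∀ (v w : E3), ((0 : ℝ), v + w) = (0, v) + (0, w) := by simp
    simp only [X', Y', Z', e1, e2, e3, e4, e5, map_add, map_sub, map_neg, map_smul,
      sub_apply, smul_apply, smul_eq_mul]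
    -- Symmetry of the Hessian cancels the mixed term `∂_t ∂_ω ψ`.
    rw [hsymm _ (1, 0) (0, sphR e θ φ)]
    change τ * sin θ * (_ + (fderiv ℝ D (c τ θ φ) _ _ + fderiv ℝ D (c τ θ φ) _ _ +
      fderiv ℝ D (c τ θ φ) _ _)) = _
    ring
  have hYZc : Continuous fun p : ℝ × ℝ × ℝ => Y' p.2.1 p.1 p.2.2 + Z' p.2.2 p.1 p.2.1 :=
    hYc.add hZc
  simp only [hsum]
  rw [triple_add (Y := fun τ θ φ => Y' θ τ φ + Z' φ τ θ) hXc hYZc,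
    triple_add (X := fun τ θ φ => Y' θ τ φ) (Y := fun τ θ φ => Z' φ τ θ) hYc hZc,
    triple_ftc hX hXc]
  have iY : ∫ τ in (0 : ℝ)..t, ∫ θ in (0 : ℝ)..π, ∫ φ in (0 : ℝ)..(2 * π), Y' θ τ φ = 0 := by
    rw [swap_cont (cont_inner hYc _ _), triple_ftc hY]
    · simp [Y]
    · exact hYc.comp (by fun_prop : Continuous fun p : ℝ × ℝ × ℝ => (p.2.1, p.1, p.2.2))
  have iZ : ∫ τ in (0 : ℝ)..t, ∫ θ in (0 : ℝ)..π, ∫ φ in (0 : ℝ)..(2 * π), Z' φ τ θ = 0 := by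
    have : ∀ τ θ, ∫ φ in (0 : ℝ)..(2 * π), Z' φ τ θ = 0 := by
      intro τ θ
      rw [intervalIntegral.integral_eq_sub_of_hasDerivAt (fun φ _ => hZ φ τ θ)]
      · simp [Z, c, sphR, sphP]
      · exact (hZc.comp (by fun_prop : Continuous fun p : ℝ => (τ, θ, p))).intervalIntegrable _ _
    simp [this]
  have hXt : ∀ θ φ, X t θ φ = 0 := by
    intro θ φ
    have b1 : Ψ (c t θ φ) = 0 := by simp [hΨ, c, h0]
    have b2 : D (c t θ φ) (1, 0) = 0 := by
      have := (hd (c t θ φ)).hasFDerivAt.comp_hasDerivAt_of_eq (0 : ℝ)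
        ((hasDerivAt_id (0 : ℝ)).prodMk (hasDerivAt_const (0 : ℝ) (c t θ φ).2)) (by simp [c])
      rw [← h1 (c t θ φ).2]
      exact this.deriv.symm
    have b3 : D (c t θ φ) (0, sphR e θ φ) = 0 := by
      have := (hd (c t θ φ)).hasFDerivAt.comp_hasDerivAt_of_eq (0 : ℝ)
        ((hasDerivAt_const (0 : ℝ) (0 : ℝ)).prodMk
          (((hasDerivAt_id (0 : ℝ)).smul_const (sphR e θ φ)).const_add (c t θ φ).2)) (by simp [c])
      have h2 := this.deriv
      have h3 : (Ψ ∘ fun y : ℝ => ((0 : ℝ), (c t θ φ).2 + id y • sphR e θ φ)) = fun _ => 0 := by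
        ext y; simp [hΨ, h0]
      rw [h3] at h2
      simpa using h2.symm
    have e2 : ((1 : ℝ), sphR e θ φ) = (0, sphR e θ φ) + (1, 0) := by simp
    simp only [X, e2, map_add, b1, b2, b3]
    ring
  have hX0 : ∀ θ φ, X 0 θ φ = sin θ * ψ t x := by
    intro θ φ; simp [X, c, hΨ]
  rw [iY, iZ]
  simp only [hXt, hX0]
  simp
  ring

/-! ### Estimates on the backward cone -/

lemma cont_max_rpow {X : Type*} [TopologicalSpace X] {f : X → ℝ} (hf : Continuous f) (p : ℝ) :
    Continuous fun x => (max (f x) 1) ^ p :=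
  (hf.max continuous_const).rpow_const fun x => Or.inl (by positivity)

/-- The integral of the majorant in the coordinates `τ = t - s`, `u = ρ - s`. Integrating in `τ` first
gains one power of `u` since `γ > 2`; the remaining power `u ^ (2 - γ - η)` is integrable at `0`
since `γ + η < 3`. The truncations by `max · 1` are inactive on the domain and make the integrand
continuous everywhere. -/
lemma null_estimate {γ η : ℝ} (hγ : 2 < γ) (hs : γ + η < 3) {t a b : ℝ} (ht : 0 ≤ t)
    (ha : 1 ≤ a) (hab : a ≤ b) :
    ∫ τ in (0 : ℝ)..t, ∫ u in a..b, (max (t - τ + u) 1) ^ (1 - γ) * (max u 1) ^ (-η)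
      ≤ 1 / ((γ - 2) * (3 - γ - η)) * b ^ (3 - γ - η) := by
  have hk : Continuous (Function.uncurry fun τ u : ℝ =>
      (max (t - τ + u) 1) ^ (1 - γ) * (max u 1) ^ (-η)) :=
    (cont_max_rpow (by fun_prop) _).mul (cont_max_rpow (by fun_prop) _)
  rw [swap_cont hk]
  have hk' : Continuous fun u => ∫ τ in (0 : ℝ)..t,
      (max (t - τ + u) 1) ^ (1 - γ) * (max u 1) ^ (-η) :=
    cont_param (F := fun u τ => (max (t - τ + u) 1) ^ (1 - γ) * (max u 1) ^ (-η))
      (hk.comp continuous_swap) 0 t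
  have h0 : (0 : ℝ) ∉ uIcc a b := by
    rw [uIcc_of_le hab]; exact fun h => by linarith [h.1]
  calc _ ≤ ∫ u in a..b, 1 / (γ - 2) * u ^ (2 - γ - η) := by
        refine intervalIntegral.integral_mono_on hab (hk'.intervalIntegrable _ _)
          ((intervalIntegral.intervalIntegrable_rpow (Or.inr h0)).const_mul _) fun u hu => ?_
        have hu1 : 1 ≤ u := ha.trans hu.1
        have hu0 : 0 < u := by linarith
        rw [intervalIntegral.integral_mul_const, max_eq_left hu1]
        have e1 : ∫ τ in (0 : ℝ)..t, (max (t - τ + u) 1) ^ (1 - γ)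
            = ∫ τ in (0 : ℝ)..t, (t + u - τ) ^ (1 - γ) := by
          refine intervalIntegral.integral_congr fun τ hτ => ?_
          rw [uIcc_of_le ht] at hτ
          rw [max_eq_left (by linarith [hτ.2]), show t - τ + u = t + u - τ by ring]
        have h0' : (0 : ℝ) ∉ uIcc u (t + u) := by
          rw [uIcc_of_le (by linarith)]; exact fun h => by linarith [h.1]
        have e2 : 2 - γ - η = (2 - γ) + (-η) := by ring
        rw [e1, intervalIntegral.integral_comp_sub_left (fun w => w ^ (1 - γ))]
        simp only [add_sub_cancel_left, sub_zero]
        rw [integral_rpow (Or.inr ⟨by linarith, h0'⟩), e2, rpow_add hu0 (2 - γ), ← mul_assoc,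
          show 1 - γ + 1 = 2 - γ by ring]
        gcongr
        rw [div_le_iff_of_neg (by linarith), div_mul_eq_mul_div, div_mul_eq_mul_div,
          le_sub_iff_add_le, div_add' _ _ _ (by linarith), div_le_iff₀ (by linarith)]
        nlinarith [mul_nonneg (rpow_nonneg (by linarith : 0 ≤ t + u) (2 - γ))
          (by linarith : 0 ≤ γ - 2)]
    _ ≤ _ := by
        rw [intervalIntegral.integral_const_mul, integral_rpow (Or.inl (by linarith)),
          show 2 - γ - η + 1 = 3 - γ - η by ring]
        have : 0 ≤ a ^ (3 - γ - η) := rpow_nonneg (by linarith) _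
        have h3 : 0 < 3 - γ - η := by linarith
        have h4 : 0 < γ - 2 := by linarith
        rw [div_mul_div_comm, one_mul, one_div_mul_eq_div]
        gcongr
        linarith

/-- The substitution `ρ = |x + τ ω|`, for which `ρ dρ = -r τ sin θ dθ`. -/
lemma sphere_subst {H : ℝ → ℝ} (hH : Continuous H) {r τ : ℝ} (hτ : 0 ≤ τ) (hr : τ < r) :
    ∫ θ in (0 : ℝ)..π, r * τ * sin θ * H (√(r ^ 2 + 2 * r * τ * cos θ + τ ^ 2))
      = ∫ ρ in (r - τ)..(r + τ), ρ * H ρ := by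
  have hpos : ∀ θ, 0 < r ^ 2 + 2 * r * τ * cos θ + τ ^ 2 := by
    intro θ
    nlinarith [mul_nonneg (mul_nonneg hτ (hτ.trans hr.le))
      (by linarith [neg_one_le_cos θ] : 0 ≤ 1 + cos θ), pow_pos (sub_pos.2 hr) 2]
  have hd : ∀ θ, HasDerivAt (fun θ => √(r ^ 2 + 2 * r * τ * cos θ + τ ^ 2))
      (-(r * τ * sin θ) / √(r ^ 2 + 2 * r * τ * cos θ + τ ^ 2)) θ := by
    intro θ
    have := ((((hasDerivAt_cos θ).const_mul (2 * r * τ)).const_add (r ^ 2)).add_const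
      (τ ^ 2)).sqrt (hpos θ).ne'
    refine this.congr_deriv ?_
    have := (sqrt_pos.2 (hpos θ)).ne'
    field_simp
  have key := intervalIntegral.integral_comp_mul_deriv (a := 0) (b := π) (fun θ _ => hd θ)
    (g := fun ρ => ρ * H ρ) (by
      refine Continuous.continuousOn (Continuous.div (by fun_prop) (by fun_prop) fun θ => ?_)
      exact (sqrt_pos.2 (hpos θ)).ne') (by fun_prop)
  have e0 : √(r ^ 2 + 2 * r * τ * cos 0 + τ ^ 2) = r + τ := by
    rw [cos_zero, ← sqrt_sq (by linarith : 0 ≤ r + τ)]; ring_nf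
  have e1 : √(r ^ 2 + 2 * r * τ * cos π + τ ^ 2) = r - τ := by
    rw [cos_pi, ← sqrt_sq (by linarith : 0 ≤ r - τ)]; ring_nf
  rw [e0, e1] at key
  rw [intervalIntegral.integral_symm (r + τ), ← key, ← intervalIntegral.integral_neg]
  refine intervalIntegral.integral_congr fun θ _ => ?_
  have := (sqrt_pos.2 (hpos θ)).ne'
  simp only [Function.comp]
  generalize √(r ^ 2 + 2 * r * τ * cos θ + τ ^ 2) = q at this
  field_simp

lemma norm_sphR (e : OrthonormalBasis (Fin 3) ℝ E3) (r τ θ φ : ℝ) :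
    ‖r • e 2 + τ • sphR e θ φ‖ = √(r ^ 2 + 2 * r * τ * cos θ + τ ^ 2) := by
  rw [norm_eq_sqrt_real_inner]
  congr 1
  have h1 := sin_sq_add_cos_sq θ
  have h2 := sin_sq_add_cos_sq φ
  simp only [sphR, inner_add_left, inner_add_right, real_inner_smul_left, real_inner_smul_right,
    OrthonormalBasis.inner_eq_ite, smul_add]
  simp
  linear_combination τ ^ 2 * sin θ ^ 2 * h2 + τ ^ 2 * h1

/-- In the exterior region `ρ - s ≥ 1` the assumed weight is controlled by `ρ ^ (-α-β) (ρ - s) ^ (-η)`.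
The factor `2` covers the case `η < 0`, where `⟨s - ρ⟩ ≤ 2 (ρ - s)` and `2 ^ (-η) ≤ 2`. -/
lemma jap_bound {γ α β η : ℝ} (hγ : γ = α + β) (hα : 0 ≤ α) (hβ : 0 ≤ β) (hη : -(1 / 2) ≤ η)
    {C s ρ : ℝ} (hC : 0 ≤ C) (hs : 0 ≤ s) (h : 1 ≤ ρ - s) :
    C * jap ρ ^ (-α) * jap (s + ρ) ^ (-β) * jap (s - ρ) ^ (-η)
      ≤ 2 * C * ((max ρ 1) ^ (-γ) * (max (ρ - s) 1) ^ (-η)) := by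
  have hρ : 1 ≤ ρ := by linarith
  have hρ0 : 0 < ρ := by linarith
  rw [max_eq_left hρ, max_eq_left h]
  have hj : ∀ x, |x| ≤ jap x := fun x => abs_le_sqrt (by linarith)
  have h1 : jap ρ ^ (-α) ≤ ρ ^ (-α) :=
    rpow_le_rpow_of_nonpos hρ0 ((le_abs_self _).trans (hj _)) (by linarith)
  have h2 : jap (s + ρ) ^ (-β) ≤ ρ ^ (-β) :=
    rpow_le_rpow_of_nonpos hρ0 (by linarith [(le_abs_self (s + ρ)).trans (hj _)]) (by linarith)
  have hu : ρ - s ≤ jap (s - ρ) := by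
    have := (neg_le_abs (s - ρ)).trans (hj (s - ρ)); linarith
  have hu2 : jap (s - ρ) ≤ 2 * (ρ - s) := by
    unfold jap
    rw [sqrt_le_left (by linarith)]
    nlinarith
  have h3 : jap (s - ρ) ^ (-η) ≤ 2 * (ρ - s) ^ (-η) := by
    have hp : 0 < (ρ - s) ^ (-η) := rpow_pos_of_pos (by linarith) _
    rcases le_total 0 η with h | h
    · have := rpow_le_rpow_of_nonpos (by linarith) hu (by linarith : -η ≤ 0)
      linarith
    · calc jap (s - ρ) ^ (-η) ≤ (2 * (ρ - s)) ^ (-η) :=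
            rpow_le_rpow (by linarith) hu2 (by linarith)
        _ = 2 ^ (-η) * (ρ - s) ^ (-η) := mul_rpow (by norm_num) (by linarith)
        _ ≤ 2 ^ (1 : ℝ) * (ρ - s) ^ (-η) := by
            gcongr
            · norm_num
            · linarith
        _ = _ := by norm_num
  have hp1 : 0 ≤ jap (s - ρ) ^ (-η) := rpow_nonneg (sqrt_nonneg _) _
  have hp2 : 0 ≤ jap (s + ρ) ^ (-β) := rpow_nonneg (sqrt_nonneg _) _
  calc _ ≤ C * ρ ^ (-α) * ρ ^ (-β) * (2 * (ρ - s) ^ (-η)) := by gcongr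
    _ = 2 * C * ((ρ ^ (-α) * ρ ^ (-β)) * (ρ - s) ^ (-η)) := by ring
    _ = _ := by rw [← rpow_add hρ0, hγ]; ring_nf

/-- The mean of the majorant over the sphere of radius `τ` about `x`, `|x| = r`, is an integral over
`u = ρ - (t - τ)` between `r - t` and `r - t + 2 τ`, which is enlarged to a range free of `τ`. -/
lemma sphere_mean_bound {γ η : ℝ} {r t τ : ℝ} (hτ : 0 ≤ τ) (hτt : τ ≤ t) (hr : 1 < r - t) :
    ∫ θ in (0 : ℝ)..π, r * τ * sin θ *
      ((max (√(r ^ 2 + 2 * r * τ * cos θ + τ ^ 2)) 1) ^ (-γ) *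
        (max (√(r ^ 2 + 2 * r * τ * cos θ + τ ^ 2) - (t - τ)) 1) ^ (-η))
      ≤ ∫ u in (r - t)..(r + t), (max (t - τ + u) 1) ^ (1 - γ) * (max u 1) ^ (-η) := by
  have hH : Continuous fun ρ : ℝ => (max ρ 1) ^ (-γ) * (max (ρ - (t - τ)) 1) ^ (-η) :=
    (cont_max_rpow (by fun_prop) _).mul (cont_max_rpow (by fun_prop) _)
  have hk : Continuous fun u : ℝ => (max (t - τ + u) 1) ^ (1 - γ) * (max u 1) ^ (-η) :=
    (cont_max_rpow (by fun_prop) _).mul (cont_max_rpow (by fun_prop) _)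
  rw [sphere_subst (H := fun ρ => (max ρ 1) ^ (-γ) * (max (ρ - (t - τ)) 1) ^ (-η)) hH hτ
    (by linarith)]
  have e1 : ∫ ρ in (r - τ)..(r + τ), ρ * ((max ρ 1) ^ (-γ) * (max (ρ - (t - τ)) 1) ^ (-η))
      = ∫ u in (r - t)..(r - t + 2 * τ),
        (max (t - τ + u) 1) ^ (1 - γ) * (max u 1) ^ (-η) := by
    have := intervalIntegral.integral_comp_add_right (a := r - t) (b := r - t + 2 * τ)
      (fun ρ => ρ * ((max ρ 1) ^ (-γ) * (max (ρ - (t - τ)) 1) ^ (-η))) (t - τ)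
    rw [show r - τ = r - t + (t - τ) by ring, show r + τ = r - t + 2 * τ + (t - τ) by ring,
      ← this]
    refine intervalIntegral.integral_congr fun u hu => ?_
    rw [uIcc_of_le (by linarith)] at hu
    have hu1 := hu.1
    simp only [add_sub_cancel_right]
    rw [add_comm u, max_eq_left (by linarith : 1 ≤ t - τ + u), sub_eq_add_neg 1 γ,
      rpow_add (by linarith : 0 < t - τ + u), rpow_one]
    ring
  rw [e1]
  refine intervalIntegral.integral_mono_interval le_rfl (by linarith) (by linarith) ?_
    (hk.intervalIntegrable _ _)
  exact Filter.Eventually.of_forall fun u => by positivity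

/-- The Kirchhoff integral of any source obeying the exterior bound along the backward cone. -/
lemma cone_bound {α β η : ℝ} (hα : 2 < α) (hβ : 0 ≤ β) (hη : -(1 / 2) ≤ η)
    (hsum : α + β + η < 3) {G : ℝ → ℝ → ℝ → ℝ} {C r t : ℝ} (hC : 0 ≤ C) (ht : 0 ≤ t)
    (hr : 1 < r - t)
    (hG : ∀ τ ∈ Icc 0 t, ∀ θ ∈ Icc 0 π, ∀ φ, |G τ θ φ| ≤ τ * sin θ *
      (2 * C * ((max (√(r ^ 2 + 2 * r * τ * cos θ + τ ^ 2)) 1) ^ (-(α + β)) *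
        (max (√(r ^ 2 + 2 * r * τ * cos θ + τ ^ 2) - (t - τ)) 1) ^ (-η)))) :
    |∫ τ in (0 : ℝ)..t, ∫ θ in (0 : ℝ)..π, ∫ φ in (0 : ℝ)..(2 * π), G τ θ φ| ≤
      4 * π * C / r * (1 / ((α + β - 2) * (3 - (α + β) - η)) * (2 * r) ^ (3 - (α + β) - η)) := by
  simp only [← Real.norm_eq_abs] at hG ⊢
  have hr0 : 0 < r := by linarith
  have hk : Continuous (Function.uncurry fun τ u : ℝ =>
      (max (t - τ + u) 1) ^ (1 - (α + β)) * (max u 1) ^ (-η)) :=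
    (cont_max_rpow (by fun_prop) _).mul (cont_max_rpow (by fun_prop) _)
  have mid : ∀ τ ∈ Icc 0 t, ‖∫ θ in (0 : ℝ)..π, ∫ φ in (0 : ℝ)..(2 * π), G τ θ φ‖ ≤
      4 * π * C / r * ∫ u in (r - t)..(r + t),
        (max (t - τ + u) 1) ^ (1 - (α + β)) * (max u 1) ^ (-η) := by
    intro τ hτ
    set W : ℝ → ℝ := fun θ => r * τ * sin θ *
      ((max (√(r ^ 2 + 2 * r * τ * cos θ + τ ^ 2)) 1) ^ (-(α + β)) *
        (max (√(r ^ 2 + 2 * r * τ * cos θ + τ ^ 2) - (t - τ)) 1) ^ (-η)) with hW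
    have hWc : Continuous W :=
      (by fun_prop : Continuous fun θ => r * τ * sin θ).mul
        ((cont_max_rpow (by fun_prop) _).mul (cont_max_rpow (by fun_prop) _))
    have hWi : IntervalIntegrable (fun θ => 4 * π * C / r * W θ) volume 0 π :=
      (hWc.const_mul _).intervalIntegrable _ _
    calc _ ≤ ∫ θ in (0 : ℝ)..π, 4 * π * C / r * W θ := by
          refine intervalIntegral.norm_integral_le_of_norm_le pi_pos.le
            (Filter.Eventually.of_forall fun θ hθ => ?_) hWi
          refine (intervalIntegral.norm_integral_le_of_norm_le_const
            (fun φ _ => hG τ hτ θ ⟨hθ.1.le, hθ.2⟩ φ)).trans (le_of_eq ?_)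
          rw [sub_zero, abs_of_pos (by positivity), hW]
          field_simp
          ring
      _ = 4 * π * C / r * ∫ θ in (0 : ℝ)..π, W θ := intervalIntegral.integral_const_mul _ _
      _ ≤ _ := by
          gcongr
          exact sphere_mean_bound hτ.1 hτ.2 hr
  have hi : IntervalIntegrable (fun τ => 4 * π * C / r * ∫ u in (r - t)..(r + t),
      (max (t - τ + u) 1) ^ (1 - (α + β)) * (max u 1) ^ (-η)) volume 0 t :=
    ((cont_param hk _ _).const_mul _).intervalIntegrable _ _
  calc _ ≤ ∫ τ in (0 : ℝ)..t, 4 * π * C / r * ∫ u in (r - t)..(r + t),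
        (max (t - τ + u) 1) ^ (1 - (α + β)) * (max u 1) ^ (-η) := by
        exact intervalIntegral.norm_integral_le_of_norm_le ht
            (Filter.Eventually.of_forall fun τ hτ => mid τ ⟨hτ.1.le, hτ.2⟩) hi
    _ = 4 * π * C / r * ∫ τ in (0 : ℝ)..t, ∫ u in (r - t)..(r + t),
        (max (t - τ + u) 1) ^ (1 - (α + β)) * (max u 1) ^ (-η) :=
        intervalIntegral.integral_const_mul _ _
    _ ≤ _ := by
        have h1 : 0 < α + β - 2 := by linarith
        have h2 : 0 < 3 - (α + β) - η := by linarith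
        gcongr
        refine (null_estimate (by linarith) (by linarith) ht hr.le (by linarith)).trans ?_
        gcongr
        linarith

/-! ### The decay estimate -/

theorem stmt3 (α β η : ℝ) (hα : 2 < α ∧ α < 3) (hβ : 0 ≤ β) (hη : -(1 / 2) ≤ η)
    (hsum : α + β + η < 3) :
    ∃ C' : ℝ, 0 < C' ∧ ∀ (ψ g : ℝ → E3 → ℝ) (C : ℝ), 0 ≤ C →
      ContDiff ℝ (⊤ : ℕ∞) (fun p : ℝ × E3 => ψ p.1 p.2) →
      (∀ t x, boxOp ψ t x = g t x) →
      (∀ x, ψ 0 x = 0) →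
      (∀ x, deriv (fun s => ψ s x) 0 = 0) →
      (∀ (t r : ℝ) (ω : E3), 0 ≤ t → 0 ≤ r → ‖ω‖ = 1 →
        |g t (r • ω)| ≤ C * jap r ^ (-α) * jap (t + r) ^ (-β) * jap (t - r) ^ (-η)) →
      ∀ (t : ℝ) (x : E3), 0 ≤ t → 1 < ‖x‖ - t →
        |ψ t x| ≤ C' * C * ‖x‖ ^ (2 - (α + β + η)) := by
  have p1 : 0 < α + β - 2 := by linarith
  have p2 : 0 < 3 - (α + β) - η := by linarith
  refine ⟨1 / ((α + β - 2) * (3 - (α + β) - η)) * 2 ^ (3 - (α + β) - η), by positivity, ?_⟩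
  intro ψ g C hC hψ hg h0 h1 hb t x ht hx
  set r := ‖x‖ with hr
  have hr0 : 0 < r := by linarith
  -- The polar axis is taken along `x`, so that `|x + τ ω|` does not depend on `φ`.
  obtain ⟨e, he⟩ : ∃ e : OrthonormalBasis (Fin 3) ℝ E3, e 2 = r⁻¹ • x := by
    have ho : Orthonormal ℝ (({2} : Set (Fin 3)).domRestrict fun _ => r⁻¹ • x) := by
      refine ⟨fun i => ?_, fun i j hij => (hij (Subsingleton.elim i j)).elim⟩
      simp only [Set.domRestrict_apply, norm_smul, norm_inv, norm_eq_abs, abs_of_pos hr0]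
      exact inv_mul_cancel₀ hr0.ne'
    obtain ⟨e, he⟩ := ho.exists_orthonormalBasis_extension_of_card_eq (by simp)
    exact ⟨e, he 2 rfl⟩
  have hxe : x = r • e 2 := by rw [he, smul_inv_smul₀ hr0.ne']
  have key := cone_bound hα.1 hβ hη hsum (r := r) hC ht hx
    (G := fun τ θ φ => τ * sin θ * boxOp ψ (t - τ) (x + τ • sphR e θ φ)) (by
      intro τ hτ θ hθ φ
      have hsin : 0 ≤ sin θ := sin_nonneg_of_mem_Icc hθ
      have hn : ‖x + τ • sphR e θ φ‖ = √(r ^ 2 + 2 * r * τ * cos θ + τ ^ 2) := by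
        rw [← norm_sphR e r τ θ φ, ← hxe]
      set y := x + τ • sphR e θ φ with hy
      have hylow : r - τ ≤ ‖y‖ := by
        rw [hn]
        apply le_sqrt_of_sq_le
        nlinarith [mul_nonneg (mul_nonneg hτ.1 hr0.le)
          (by linarith [neg_one_le_cos θ] : 0 ≤ 1 + cos θ)]
      have hy0 : 0 < ‖y‖ := by linarith [hτ.2]
      rw [abs_mul, abs_of_nonneg (mul_nonneg hτ.1 hsin), hg, ← hn]
      refine mul_le_mul_of_nonneg_left ?_ (mul_nonneg hτ.1 hsin)
      have hu : ‖‖y‖⁻¹ • y‖ = 1 := by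
        rw [norm_smul, norm_inv, norm_norm, inv_mul_cancel₀ hy0.ne']
      have := hb (t - τ) ‖y‖ (‖y‖⁻¹ • y) (by linarith [hτ.2]) hy0.le hu
      rw [smul_inv_smul₀ hy0.ne'] at this
      exact this.trans (jap_bound rfl (by linarith) hβ hη hC (by linarith [hτ.2])
        (by linarith)))
  rw [kirchhoff hψ h0 h1 e t x, abs_neg, abs_mul, abs_of_pos (by positivity : 0 < 4 * π),
    mul_rpow (by norm_num) hr0.le] at key
  have e1 : r ^ (3 - (α + β) - η) = r ^ (2 - (α + β + η)) * r := by
    rw [← rpow_add_one hr0.ne']; ring_nf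
  rw [e1] at key
  refine le_of_mul_le_mul_left (key.trans (le_of_eq ?_)) (by positivity : 0 < 4 * π)
  field_simp
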